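/- Let (X_n, p_{n+1} : X_{n+1} → X_n)_{n ≥ 0} be a tower of fibrations of pointed topological spaces, with a chosen basepoint of lim_n X_n whose images give the basepoints of each X_n. Then for every k ≥ 0, the natural map P : π_k(lim_n X_n) → lim_n π_k X_n induced by the projections P_n : lim_n X_n → X_n is surjective. (π_k is a group for k ≥ 1 and a pointed set for k = 0; lim_n π_k X_n is the inverse limit of the tower of groups, respectively pointed sets, π_k X_n with structure maps (p_{n+1})_*.) -/

import Mathlib

open scoped unitInterval Topology Topology.Homotopy

noncomputable section

/-- A map is a *Serre fibration* if it has the homotopy lifting property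
with respect to all cubes `I^k`. -/
def IsSerreFibration {E B : Type} [TopologicalSpace E] [TopologicalSpace B]
    (p : C(E, B)) : Prop :=
  ∀ (k : ℕ) (f : C((Fin k → I), E)) (H : C(I × (Fin k → I), B)),
    (∀ q, H (0, q) = p (f q)) →
      ∃ G : C(I × (Fin k → I), E),
        (∀ q, G (0, q) = f q) ∧ ∀ z, p (G z) = H z

/-- The inverse limit of a tower of spaces. -/
def TowerLim (X : ℕ → Type) [∀ n, TopologicalSpace (X n)]
    (p : ∀ n, C(X (n + 1), X n)) : Type :=
  { z : ∀ n, X n // ∀ n, p n (z (n + 1)) = z n }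

instance {X : ℕ → Type} [∀ n, TopologicalSpace (X n)] (p : ∀ n, C(X (n + 1), X n)) :
    TopologicalSpace (TowerLim X p) :=
  instTopologicalSpaceSubtype

/-- The projection from the inverse limit of a tower to the `n`th space. -/
def TowerLim.proj {X : ℕ → Type} [∀ n, TopologicalSpace (X n)]
    {p : ∀ n, C(X (n + 1), X n)} (n : ℕ) : C(TowerLim X p, X n) :=
  ⟨fun z => z.1 n, (continuous_apply n).comp continuous_subtype_val⟩

/-- The map induced on homotopy groups (in particular on `π_k` for `N = Fin k`)
by a continuous map `f` with `f x = y`. -/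
def piMap {X Y : Type} [TopologicalSpace X] [TopologicalSpace Y] (N : Type)
    (f : C(X, Y)) {x : X} {y : Y} (hf : f x = y) :
    HomotopyGroup N X x → HomotopyGroup N Y y :=
  Quotient.map
    (fun g => (⟨f.comp g.1, fun q hq => by
        rw [ContinuousMap.comp_apply, g.2 q hq, hf]⟩ : GenLoop N Y y))
    (fun g h H => H.map fun F => F.compContinuousMap f)


/-- The map `π_k (lim_n X_n) → π_k (X n)` induced by the projection `TowerLim.proj n`,
for the basepoint `⟨x, hx⟩` of the inverse limit. -/
def piProjMap {X : ℕ → Type} [∀ n, TopologicalSpace (X n)] {p : ∀ n, C(X (n + 1), X n)}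
    (k : ℕ) {x : ∀ n, X n} (hx : ∀ n, p n (x (n + 1)) = x n) (n : ℕ) :
    HomotopyGroup (Fin k) (TowerLim X p) (⟨x, hx⟩ : TowerLim X p) →
      HomotopyGroup (Fin k) (X n) (x n) :=
  piMap (Fin k) (TowerLim.proj n) rfl

/-- The map `π_k (X (n+1)) → π_k (X n)` induced by the map `p n` of the tower. -/
def piTowerMap {X : ℕ → Type} [∀ n, TopologicalSpace (X n)] {p : ∀ n, C(X (n + 1), X n)}
    (k : ℕ) {x : ∀ n, X n} (hx : ∀ n, p n (x (n + 1)) = x n) (n : ℕ) :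
    HomotopyGroup (Fin k) (X (n + 1)) (x (n + 1)) → HomotopyGroup (Fin k) (X n) (x n) :=
  piMap (Fin k) (p n) (hx n)

/-- The distinguished basepoint of `HomotopyGroup N X x`: the class of the constant map. -/
def piConst {X : Type} [TopologicalSpace X] (N : Type) (x : X) : HomotopyGroup N X x :=
  ⟦GenLoop.const⟧

/-- The parameter measuring how far a point of `I × I^k` is from `0 × I^k ∪ I × ∂I^k`. -/
def boxPhi {k : ℕ} (t : I) (q : Fin k → I) : ℝ :=
  min (t : ℝ) (2 * (1 - ‖fun i => 2 * (q i : ℝ) - 1‖))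

lemma boxPhi_continuous {k : ℕ} : Continuous (fun y : I × (Fin k → I) => boxPhi y.1 y.2) := by
  unfold boxPhi
  fun_prop

lemma box_norm_le {k : ℕ} (q : Fin k → I) : ‖fun i => 2 * (q i : ℝ) - 1‖ ≤ 1 := by
  rw [pi_norm_le_iff_of_nonneg zero_le_one]
  intro i
  rw [Real.norm_eq_abs, abs_le]
  constructor <;> linarith [(q i).2.1, (q i).2.2]

lemma boxPhi_nonneg {k : ℕ} (t : I) (q : Fin k → I) : 0 ≤ boxPhi t q :=
  le_min t.2.1 (by linarith [box_norm_le q])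

lemma boxPhi_le {k : ℕ} (t : I) (q : Fin k → I) : boxPhi t q ≤ 1 :=
  (min_le_left _ _).trans t.2.2

lemma boxPhi_zero {k : ℕ} (q : Fin k → I) : boxPhi 0 q = 0 :=
  le_antisymm (min_le_left _ _) (boxPhi_nonneg _ _)

lemma boxPhi_boundary {k : ℕ} (t : I) (q : Fin k → I) (hq : q ∈ Cube.boundary (Fin k)) :
    boxPhi t q = 0 := by
  refine le_antisymm ((min_le_right _ _).trans ?_) (boxPhi_nonneg _ _)
  obtain ⟨i, hi⟩ := hq
  have h := norm_le_pi_norm (fun i => 2 * (q i : ℝ) - 1) i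
  have h1 : ‖2 * (q i : ℝ) - 1‖ = 1 := by
    rcases hi with hi | hi <;> rw [hi] <;> norm_num
  linarith

/-- Clamp a real number to the unit interval. -/
def clampI (r : ℝ) : I := Set.projIcc (0 : ℝ) 1 zero_le_one r

lemma clampI_continuous : Continuous clampI :=
  continuous_projIcc (h := zero_le_one)

lemma clampI_coe (t : I) : clampI (t : ℝ) = t := Set.projIcc_val _ t

/-- Time coordinate of the flow. -/
def flowT (t : I) (τ : ℝ) : I := clampI (t - τ)

/-- Cube coordinate of the flow. -/
def flowQ {k : ℕ} (q : Fin k → I) (τ : ℝ) : Fin k → I :=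
  fun i => clampI (q i + (q i - 1 / 2) * (2 * τ))

lemma flowT_zero (t : I) : flowT t 0 = t := by simp [flowT, clampI_coe]

lemma flowQ_zero {k : ℕ} (q : Fin k → I) : flowQ q 0 = q := by
  funext i; simp [flowQ, clampI_coe]

lemma flow_mem {k : ℕ} (t : I) (q : Fin k → I) :
    flowT t (boxPhi t q) = 0 ∨ flowQ q (boxPhi t q) ∈ Cube.boundary (Fin k) := by
  rcases le_total (t : ℝ) (2 * (1 - ‖fun i => 2 * (q i : ℝ) - 1‖)) with h | h
  · left
    have : boxPhi t q = t := min_eq_left h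
    rw [this, flowT, sub_self]
    exact clampI_coe 0
  · right
    have hphi : boxPhi t q = 2 * (1 - ‖fun i => 2 * (q i : ℝ) - 1‖) := min_eq_right h
    by_contra hc
    have hM := box_norm_le q
    have ht := t.2.2
    have h0 := boxPhi_nonneg t q
    set M := ‖fun i => 2 * (q i : ℝ) - 1‖ with hMdef
    set τ := boxPhi t q
    have hlt : ∀ i, |(2 * (q i : ℝ) - 1) * (1 + 2 * τ)| < 1 := by
      intro i
      by_contra hi
      apply hc
      refine ⟨i, ?_⟩
      rw [not_lt, le_abs] at hi
      rcases hi with hi | hi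
      · right
        exact Set.projIcc_of_right_le zero_le_one (by linarith)
      · left
        exact Set.projIcc_of_le_left zero_le_one (by linarith)
    have hpos : 0 < 1 + 2 * τ := by linarith
    have hlt2 : M < 1 / (1 + 2 * τ) := by
      rw [hMdef, pi_norm_lt_iff (by positivity)]
      intro i
      have := hlt i
      rw [abs_mul, abs_of_pos hpos] at this
      rw [Real.norm_eq_abs, lt_div_iff₀ hpos]
      exact this
    rw [lt_div_iff₀ hpos, hphi] at hlt2
    nlinarith

/-- Relative homotopy lifting for `(I^k, ∂I^k)`. -/
lemma rel_lift {E B : Type} [TopologicalSpace E] [TopologicalSpace B]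
    (p : C(E, B)) (hp : IsSerreFibration p) {k : ℕ} (f : C((Fin k → I), E))
    (H : C(I × (Fin k → I), B)) (h0 : ∀ q, H (0, q) = p (f q))
    (hb : ∀ t, ∀ q ∈ Cube.boundary (Fin k), H (t, q) = p (f q)) :
    ∃ G : C(I × (Fin k → I), E), (∀ q, G (0, q) = f q) ∧ (∀ z, p (G z) = H z) ∧
      ∀ t, ∀ q ∈ Cube.boundary (Fin k), G (t, q) = f q := by
  have hT : Continuous (fun z : I × ℝ => flowT z.1 z.2) :=
    clampI_continuous.comp (by fun_prop)
  have hQ : Continuous (fun z : (Fin k → I) × ℝ => flowQ z.1 z.2) :=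
    continuous_pi fun i => clampI_continuous.comp (by fun_prop)
  have htail : Continuous (fun y : Fin (k + 1) → I => (fun i => y (Fin.succ i) : Fin k → I)) := by
    fun_prop
  have hphi : Continuous (fun y : Fin (k + 1) → I => boxPhi (y 0) (fun i => y (Fin.succ i))) :=
    boxPhi_continuous.comp ((continuous_apply 0).prodMk htail)
  obtain ⟨G, hG0, hG⟩ := hp (k + 1)
    ⟨fun y => f (flowQ (fun i => y (Fin.succ i)) (boxPhi (y 0) (fun i => y (Fin.succ i)))),
      f.continuous.comp (hQ.comp (htail.prodMk hphi))⟩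
    ⟨fun z => H (flowT (z.2 0) (boxPhi (z.2 0) (fun i => z.2 (Fin.succ i)) - z.1),
        flowQ (fun i => z.2 (Fin.succ i)) (boxPhi (z.2 0) (fun i => z.2 (Fin.succ i)) - z.1)),
      H.continuous.comp (by
        have hs : Continuous (fun z : I × (Fin (k + 1) → I) =>
            boxPhi (z.2 0) (fun i => z.2 (Fin.succ i)) - (z.1 : ℝ)) :=
          (hphi.comp continuous_snd).sub (continuous_subtype_val.comp continuous_fst)
        exact (hT.comp (((continuous_apply 0).comp continuous_snd).prodMk hs)).prodMk
          (hQ.comp ((htail.comp continuous_snd).prodMk hs)))⟩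
    (by
      intro y
      simp only [ContinuousMap.coe_mk, Set.Icc.coe_zero, sub_zero]
      rcases flow_mem (y 0) (fun i => y (Fin.succ i)) with h | h
      · rw [h, h0]
      · exact hb _ _ h)
  have hval : ∀ t q, boxPhi t q = 0 →
      G (clampI (boxPhi t q), (Fin.cons t q : Fin (k + 1) → I)) = f q := by
    intro t q h
    have hc : clampI 0 = 0 := clampI_coe 0
    rw [h, hc, hG0]
    simp [h, flowQ_zero]
  refine ⟨⟨fun z => G (clampI (boxPhi z.1 z.2), (Fin.cons z.1 z.2 : Fin (k + 1) → I)),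
    G.continuous.comp ((clampI_continuous.comp boxPhi_continuous).prodMk ?_)⟩, ?_, ?_, ?_⟩
  · refine continuous_pi fun i => ?_
    refine Fin.cases ?_ (fun j => ?_) i
    · simpa using continuous_fst
    · simp only [Fin.cons_succ]; fun_prop
  · intro q
    exact hval 0 q (boxPhi_zero q)
  · rintro ⟨t, q⟩
    have hc : ((clampI (boxPhi t q) : I) : ℝ) = boxPhi t q :=
      congrArg Subtype.val (clampI_coe ⟨boxPhi t q, boxPhi_nonneg t q, boxPhi_le t q⟩)
    simp only [ContinuousMap.coe_mk]
    rw [hG]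
    simp [hc, flowQ_zero, flowT_zero]
  · intro t q hq
    exact hval t q (boxPhi_boundary t q hq)

/-- One step of the tower: a loop representing `β` lifting a given representative of `p_* β`. -/
lemma step_lift {E B : Type} [TopologicalSpace E] [TopologicalSpace B]
    (p : C(E, B)) (hp : IsSerreFibration p) {k : ℕ} {e : E} {b : B} (he : p e = b)
    (β : HomotopyGroup (Fin k) E e) (g : GenLoop (Fin k) B b)
    (hg : piMap (Fin k) p he β = (⟦g⟧ : HomotopyGroup (Fin k) B b)) :
    ∃ g' : GenLoop (Fin k) E e, (⟦g'⟧ : HomotopyGroup (Fin k) E e) = β ∧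
      ∀ q, p (g' q) = g q := by
  induction β using Quotient.inductionOn with
  | h h =>
  obtain ⟨F⟩ := Quotient.exact hg
  obtain ⟨G, hG0, hG, hGb⟩ := rel_lift p hp h.1 F.toContinuousMap
    (fun q => F.apply_zero q) (fun t q hq => F.eq_fst t hq)
  refine ⟨⟨⟨fun q => G (1, q), by fun_prop⟩, fun q hq => (hGb 1 q hq).trans (h.2 q hq)⟩, ?_, ?_⟩
  · symm
    apply Quotient.sound
    exact ⟨{ toContinuousMap := G
             map_zero_left := hG0
             map_one_left := fun q => rfl
             prop' := fun t q hq => hGb t q hq }⟩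
  · intro q
    exact (hG (1, q)).trans (F.apply_one q)

/-- **Surjectivity of `P` (Proposition 4.2 of the paper).**  Let `(X n, p n)` be a tower of
fibrations of pointed topological spaces, with basepoints the components `x n` of a chosen
point of the inverse limit.  For every `k ≥ 0`, the natural map
`P : π_k (lim_n X_n) → lim_n π_k X_n` induced by the projections `P_n` is surjective:
every family of elements `a n ∈ π_k (X n)` that is compatible (each `a (n+1)` is carried to
`a n` by the map induced by `p n`) is the image under the maps induced by the projections
of a single element of `π_k` of the inverse limit.  (`π_k` is a group for `k ≥ 1` and a
pointed set for `k = 0`; surjectivity is a statement about the underlying sets.) -/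
theorem pi_towerLim_to_lim_pi_surjective
    (X : ℕ → Type) [∀ n, TopologicalSpace (X n)] (p : ∀ n, C(X (n + 1), X n))
    (hfib : ∀ n, IsSerreFibration (p n))
    (x : ∀ n, X n) (hx : ∀ n, p n (x (n + 1)) = x n)
    (k : ℕ)
    (a : ∀ n, HomotopyGroup (Fin k) (X n) (x n))
    (ha : ∀ n, piTowerMap k hx n (a (n + 1)) = a n) :
    ∃ b : HomotopyGroup (Fin k) (TowerLim X p) (⟨x, hx⟩ : TowerLim X p),
      ∀ n, piProjMap k hx n b = a n := by
  have hstep : ∀ n (g : {g : GenLoop (Fin k) (X n) (x n) //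
      (⟦g⟧ : HomotopyGroup (Fin k) (X n) (x n)) = a n}),
      ∃ g' : {g : GenLoop (Fin k) (X (n + 1)) (x (n + 1)) //
        (⟦g⟧ : HomotopyGroup (Fin k) (X (n + 1)) (x (n + 1))) = a (n + 1)},
        ∀ q, p n (g'.1 q) = g.1 q := by
    intro n g
    obtain ⟨g', h1, h2⟩ := step_lift (p n) (hfib n) (hx n) (a (n + 1)) g.1
      ((ha n).trans g.2.symm)
    exact ⟨⟨g', h1⟩, h2⟩
  choose S hS using hstep
  obtain ⟨g0, hg0⟩ := Quotient.exists_rep (a 0)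
  let g : ∀ n, {g : GenLoop (Fin k) (X n) (x n) //
      (⟦g⟧ : HomotopyGroup (Fin k) (X n) (x n)) = a n} :=
    fun n => Nat.rec ⟨g0, hg0⟩ (fun n g => S n g) n
  have hgs : ∀ n q, p n ((g (n + 1)).1 q) = (g n).1 q := fun n q => hS n (g n) q
  let L : GenLoop (Fin k) (TowerLim X p) (⟨x, hx⟩ : TowerLim X p) :=
    ⟨⟨fun q => ⟨fun n => (g n).1 q, fun n => hgs n q⟩,
      Continuous.subtype_mk (continuous_pi fun n => (g n).1.1.continuous) _⟩,
      fun q hq => Subtype.ext (funext fun n => (g n).1.2 q hq)⟩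
  refine ⟨⟦L⟧, fun n => ?_⟩
  rw [← (g n).2]
  rfl

end
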